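/- (Theorem A, parabolic case.) Let g be a holomorphic function on the punctured unit disc 𝔻* and let c ∈ ℂ with c ≠ 0. Assume that for every θ ∈ ℝ there exists a branch L_θ of the logarithm on 𝔻 ∖ l^θ such that the map φ_θ(z) = g(z) + (c/(2πi))·L_θ(z) is injective on 𝔻 ∖ l^θ (so that φ_θ is a developing map of a uniformizable projective structure on 𝔻* with parabolic monodromy z ↦ z + c). Then: (1) there exist a₋₁ ∈ ℂ and a holomorphic function G on 𝔻 with g(z) = a₋₁/z + G(z) on 𝔻* (g extends meromorphically with a pole of order at most 1 at 0); and (2) if a₋₁ ≠ 0, then for each θ there is ρ ∈ (0,1) such that the Schwarzian derivative ξ = S(φ_θ) is defined on B(0,ρ) ∖ l^θ and the function z ↦ ξ(z) + c/(a₋₁·π·i·z) extends holomorphically to B(0,ρ); that is, ξ has a simple pole at 0 with residue −c/(a₋₁·π·i). -/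

import Mathlib

open Complex Metric Set Filter Topology

/-- The closed ray `{t·e^{iθ} : t ≥ 0} ⊆ ℂ`. -/
def lray (θ : ℝ) : Set ℂ :=
  {z : ℂ | ∃ t : ℝ, 0 ≤ t ∧ z = (t : ℂ) * Complex.exp (θ * Complex.I)}

/-- The Schwarzian derivative `S(f) = (f''/f')' - (1/2)·(f''/f')²`. -/
noncomputable def schwarzian (f : ℂ → ℂ) (z : ℂ) : ℂ :=
  deriv (fun w => deriv (deriv f) w / deriv f w) z
    - (1 / 2) * (deriv (deriv f) z / deriv f z) ^ 2

/-!
Write `κ = c / (2πi)` and `f = g + κ L`; then `z f' = z g' + κ` does not depend on the branch `L`.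
For small `p` and suitable `s < 1`, the map `ζ ↦ p ((1 + s ζ) / (1 - s ζ)) ^ 2` sends the unit disc
univalently into the disc slit along the ray opposite to `p`, so Bieberbach's inequality `|a₂| ≤ 2`
for its composite with `f` gives `|p (z g')'(p)| ≤ 3/2 |p g'(p) + κ|`. Grönwall's inequality along
radii, applied to the pair `(g, z g')`, turns this into `g = O(|z| ^ (-3/2))`, so `z g` has a
removable singularity.

Bieberbach's inequality follows from the area theorem for univalent functions `z⁻¹ + n z` with `n`
holomorphic: a value not taken on the punctured closed disc of radius `r` lies in the convex hull of
the image of the bounding circle, hence in an explicit ellipse, and as `r → 0` the area of the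
ellipse is compared with that of the image of the annulus `r < |z| < s`.

Once `g = a / z + G` with `a ≠ 0`, the derivative of `f` is `u / z ^ 2` with `u 0 = -a` and
`u' 0 = κ`, and the Schwarzian derivative of such an `f` has principal part `2 u' 0 / (u 0 z)`.
-/

section

open MeasureTheory Real ComplexConjugate

/-! ### Integrals over annuli -/

theorem intervalIntegral_circleMap_eq_circleAverage {E : Type*} [NormedAddCommGroup E]
    [NormedSpace ℝ E] (F : ℂ → E) (c : ℂ) (t : ℝ) :
    ∫ θ in -π..π, F (circleMap c t θ) = (2 * π) • circleAverage F c t := by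
  have hper : Function.Periodic (fun θ => F (circleMap c t θ)) (2 * π) :=
    fun θ => congrArg F (periodic_circleMap c t θ)
  rw [circleAverage_def, smul_inv_smul₀ Real.two_pi_pos.ne']
  simpa [two_mul] using hper.intervalIntegral_add_eq (-π) 0

theorem polarCoord_symm_eq_circleMap (p : ℝ × ℝ) :
    Complex.polarCoord.symm p = circleMap 0 p.1 p.2 := by
  simp [circleMap, Complex.exp_mul_I]

theorem setIntegral_annulus_eq_intervalIntegral_circleAverage {E : Type*} [NormedAddCommGroup E]
    [NormedSpace ℝ E] {F : ℂ → E} {a b : ℝ} (ha : 0 ≤ a) (hab : a ≤ b)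
    (hF : ContinuousOn F (closedBall 0 b \ ball 0 a)) :
    ∫ z in ball 0 b \ closedBall 0 a, F z = ∫ t in a..b, (2 * π * t) • circleAverage F 0 t := by
  have hmem : ∀ t ∈ Icc a b, ∀ θ, circleMap 0 t θ ∈ closedBall (0 : ℂ) b \ ball 0 a := by
    rintro t ⟨hat, htb⟩ θ
    simp [abs_of_nonneg (ha.trans hat), hat, htb]
  have hcont : ContinuousOn (fun p : ℝ × ℝ => p.1 • F (circleMap 0 p.1 p.2))
      (Icc a b ×ˢ Icc (-π) π) := by
    refine continuousOn_fst.smul (hF.comp ?_ fun p hp => hmem p.1 hp.1 p.2)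
    unfold circleMap
    fun_prop
  have hint : IntegrableOn (fun p : ℝ × ℝ => p.1 • F (circleMap 0 p.1 p.2))
      (Ioo a b ×ˢ Ioo (-π) π) (volume.prod volume) :=
    (hcont.integrableOn_compact (isCompact_Icc.prod isCompact_Icc)).mono_set
      (prod_mono Ioo_subset_Icc_self Ioo_subset_Icc_self)
  have hind : ∀ p ∈ polarCoord.target, p.1 • (ball 0 b \ closedBall 0 a).indicator F
      (Complex.polarCoord.symm p) =
        (Ioo a b ×ˢ Ioo (-π) π).indicator (fun p : ℝ × ℝ => p.1 • F (circleMap 0 p.1 p.2)) p := by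
    rintro ⟨t, θ⟩ ⟨ht, hθ⟩
    have ht' : |t| = t := abs_of_pos ht
    rw [polarCoord_symm_eq_circleMap]
    simp [indicator, ht', mem_Ioo.1 hθ, and_comm]
  have hsub : Ioo a b ×ˢ Ioo (-π) π ⊆ polarCoord.target :=
    prod_mono (fun t ht => ha.trans_lt ht.1) subset_rfl
  calc ∫ z in ball 0 b \ closedBall 0 a, F z
      = ∫ p in Ioo a b ×ˢ Ioo (-π) π, p.1 • F (circleMap 0 p.1 p.2) := by
        rw [← integral_indicator (measurableSet_ball.diff measurableSet_closedBall),
          ← Complex.integral_comp_polarCoord_symm,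
          setIntegral_congr_fun polarCoord.open_target.measurableSet hind,
          setIntegral_indicator (measurableSet_Ioo.prod measurableSet_Ioo),
          inter_eq_self_of_subset_right hsub]
    _ = ∫ t in Ioo a b, ∫ θ in Ioo (-π) π, t • F (circleMap 0 t θ) := setIntegral_prod _ hint
    _ = ∫ t in a..b, (2 * π * t) • circleAverage F 0 t := by
        rw [intervalIntegral.integral_of_le hab, integral_Ioc_eq_integral_Ioo]
        refine setIntegral_congr_fun measurableSet_Ioo fun t _ => ?_
        rw [integral_smul, ← integral_Ioc_eq_integral_Ioo,
          ← intervalIntegral.integral_of_le (by linarith [pi_pos]),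
          intervalIntegral_circleMap_eq_circleAverage, smul_smul, mul_comm t]

theorem circleAverage_re_eq {f : ℂ → ℂ} {r : ℝ} (hr : 0 ≤ r) (hf : DiffContOnCl ℂ f (ball 0 r)) :
    circleAverage (fun z => (f z).re) 0 r = (f 0).re := by
  have hint : CircleIntegrable f 0 r :=
    (hf.continuousOn_ball.mono sphere_subset_closedBall).circleIntegrable hr
  rw [← abs_of_nonneg hr] at hf
  rw [← hf.circleAverage]
  exact reCLM.circleAverage_comp_comm hint

theorem norm_sub_sq_eq_re_conj_mul (w b : ℂ) :
    ‖w - b‖ ^ 2 = ‖w‖ ^ 2 - 2 * (conj b * w).re + ‖b‖ ^ 2 := by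
  simp only [← normSq_eq_norm_sq, normSq_sub, mul_comm (conj b)]
  ring

theorem conj_inv_sq_eq {z : ℂ} (hz : z ≠ 0) : conj (z ^ 2)⁻¹ = (‖z‖ ^ 4 : ℂ)⁻¹ * z ^ 2 := by
  have hz' : conj z ≠ 0 := by simpa
  have : (‖z‖ : ℂ) ^ 4 = (z * conj z) ^ 2 := by
    rw [mul_conj, normSq_eq_norm_sq]
    push_cast
    ring
  rw [this, map_inv₀, map_pow]
  field_simp

theorem inv_pow_four_add_sq_le_circleAverage {k : ℂ → ℂ} {r : ℝ} (hr : 0 < r)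
    (hk : DiffContOnCl ℂ k (ball 0 r)) :
    (r ^ 4)⁻¹ + ‖k 0‖ ^ 2 ≤ circleAverage (fun z => ‖k z - (z ^ 2)⁻¹‖ ^ 2) 0 r := by
  -- The cross terms in the expansion of the square are real parts of holomorphic functions,
  -- because `conj (z ^ 2)⁻¹ = z ^ 2 / r ^ 4` on the circle.
  set f : ℂ → ℂ := fun z =>
    (2 * conj (k 0) - 2 * (r ^ 4 : ℂ)⁻¹ * z ^ 2) * k z + ((r ^ 4)⁻¹ - ‖k 0‖ ^ 2) with hf_def
  have hf : DiffContOnCl ℂ f (ball 0 r) := by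
    have : Differentiable ℂ fun z : ℂ => 2 * conj (k 0) - 2 * (r ^ 4 : ℂ)⁻¹ * z ^ 2 := by fun_prop
    exact (this.diffContOnCl.smul hk).add_const _
  have hk' : ContinuousOn k (sphere 0 r) := hk.continuousOn_ball.mono sphere_subset_closedBall
  have hf' : ContinuousOn f (sphere 0 r) := hf.continuousOn_ball.mono sphere_subset_closedBall
  have hz0 : ∀ z ∈ sphere (0 : ℂ) r, z ^ 2 ≠ 0 := fun z hz =>
    pow_ne_zero 2 (ne_of_mem_sphere hz hr.ne')
  have hf_le : ∀ z ∈ sphere (0 : ℂ) r, (f z).re ≤ ‖k z - (z ^ 2)⁻¹‖ ^ 2 := by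
    intro z hz
    have hzr : ‖z‖ = r := mem_sphere_zero_iff_norm.1 hz
    have hsq := sq_nonneg ‖k z - k 0‖
    rw [norm_sub_sq_eq_re_conj_mul] at hsq ⊢
    rw [conj_inv_sq_eq (ne_of_mem_sphere hz hr.ne'), norm_inv, norm_pow, hzr]
    have : f z = (2 : ℝ) * (conj (k 0) * k z) - (2 : ℝ) * ((r ^ 4 : ℂ)⁻¹ * z ^ 2 * k z) +
        (((r ^ 4)⁻¹ - ‖k 0‖ ^ 2 : ℝ) : ℂ) := by
      simp only [hf_def]
      push_cast
      ring
    rw [this, add_re, sub_re, re_ofReal_mul, re_ofReal_mul, ofReal_re, inv_pow, ← pow_mul]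
    linarith
  calc (r ^ 4)⁻¹ + ‖k 0‖ ^ 2 = (f 0).re := by
        have : f 0 = (((r ^ 4)⁻¹ + ‖k 0‖ ^ 2 : ℝ) : ℂ) := by
          have := conj_mul' (k 0)
          simp only [hf_def]
          push_cast
          linear_combination 2 * this
        rw [this, ofReal_re]
    _ = circleAverage (fun z => (f z).re) 0 r := (circleAverage_re_eq hr.le hf).symm
    _ ≤ circleAverage (fun z => ‖k z - (z ^ 2)⁻¹‖ ^ 2) 0 r := by
        refine circleAverage_mono (ContinuousOn.circleIntegrable hr.le (by fun_prop))
          (ContinuousOn.circleIntegrable hr.le (by fun_prop (disch := assumption))) ?_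
        rwa [abs_of_pos hr]

theorem le_setIntegral_annulus_norm_sub_inv_sq_sq {k : ℂ → ℂ} {r s : ℝ} (hr : 0 < r) (hrs : r ≤ s)
    (hk : DiffContOnCl ℂ k (ball 0 s)) :
    π * ((r ^ 2)⁻¹ - (s ^ 2)⁻¹) + π * ‖k 0‖ ^ 2 * (s ^ 2 - r ^ 2) ≤
      ∫ z in ball 0 s \ closedBall 0 r, ‖k z - (z ^ 2)⁻¹‖ ^ 2 := by
  have hpos : ∀ t ∈ Icc r s, t ≠ 0 := fun t ht => (hr.trans_le ht.1).ne'
  have hcont : ContinuousOn (fun z => ‖k z - (z ^ 2)⁻¹‖ ^ 2) (closedBall 0 s \ ball 0 r) := by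
    have hk' := hk.continuousOn_ball.mono (sdiff_subset (t := ball 0 r))
    have hz : ∀ z ∈ closedBall (0 : ℂ) s \ ball 0 r, z ^ 2 ≠ 0 := by
      rintro z ⟨-, hz⟩
      exact pow_ne_zero 2 fun h => hz (by simpa [h] using hr)
    fun_prop (disch := assumption)
  rw [setIntegral_annulus_eq_intervalIntegral_circleAverage hr.le hrs hcont]
  have havg : ContinuousOn (circleAverage (fun z => ‖k z - (z ^ 2)⁻¹‖ ^ 2) 0) (Icc r s) := by
    refine Real.ContinuousOn.circleAverage (hcont.mono fun z hz => ?_) fun t ht => hr.le.trans ht.1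
    simpa [and_comm] using hz
  have hderiv : ∀ t ∈ Ioo r s, HasDerivAt (fun t => -π * (t ^ 2)⁻¹ + π * ‖k 0‖ ^ 2 * t ^ 2)
      (2 * π * t * ((t ^ 4)⁻¹ + ‖k 0‖ ^ 2)) t := by
    intro t ht
    have ht0 := hpos t (Ioo_subset_Icc_self ht)
    have hpow : HasDerivAt (fun t : ℝ => t ^ 2) (2 * t) t := by simpa using hasDerivAt_pow 2 t
    refine (((hpow.inv (pow_ne_zero 2 ht0)).const_mul (-π)).add
      (hpow.const_mul (π * ‖k 0‖ ^ 2))).congr_deriv ?_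
    field_simp
  have hftc := intervalIntegral.sub_le_integral_of_hasDeriv_right_of_le hrs
    (g := fun t => -π * (t ^ 2)⁻¹ + π * ‖k 0‖ ^ 2 * t ^ 2)
    (φ := fun t => (2 * π * t) • circleAverage (fun z => ‖k z - (z ^ 2)⁻¹‖ ^ 2) 0 t)
    (by fun_prop (disch := simpa using hpos)) (fun t ht => (hderiv t ht).hasDerivWithinAt)
    (ContinuousOn.integrableOn_Icc (by fun_prop)) fun t ht => ?_
  · linarith
  · have ht0 : 0 < t := hr.trans ht.1
    rw [smul_eq_mul]
    gcongr
    exact inv_pow_four_add_sq_le_circleAverage ht0 (hk.mono (ball_subset_ball ht.2.le))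

/-! ### The area theorem -/

theorem det_restrictScalars_toSpanSingleton (d : ℂ) :
    ((ContinuousLinearMap.toSpanSingleton ℂ d).restrictScalars ℝ).det = ‖d‖ ^ 2 := by
  have : (ContinuousLinearMap.toSpanSingleton ℂ d : ℂ →ₗ[ℂ] ℂ) = d • LinearMap.id := by
    ext
    simp
  change LinearMap.det ((ContinuousLinearMap.toSpanSingleton ℂ d : ℂ →ₗ[ℂ] ℂ).restrictScalars ℝ) = _
  rw [this, LinearMap.det_restrictScalars]
  simp [Algebra.norm_complex_eq, normSq_eq_norm_sq]

theorem volume_image_eq_lintegral_norm_deriv_sq {f : ℂ → ℂ} {s : Set ℂ} (hs : IsOpen s)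
    (hf : DifferentiableOn ℂ f s) (hinj : InjOn f s) :
    volume (f '' s) = ∫⁻ z in s, ENNReal.ofReal (‖deriv f z‖ ^ 2) := by
  have hderiv : ∀ z ∈ s, HasFDerivWithinAt f
      ((ContinuousLinearMap.toSpanSingleton ℂ (deriv f z)).restrictScalars ℝ) s z := fun z hz =>
    ((hf.differentiableAt (hs.mem_nhds hz)).hasDerivAt.hasFDerivAt.restrictScalars
      ℝ).hasFDerivWithinAt
  rw [← lintegral_abs_det_fderiv_eq_addHaar_image volume hs.measurableSet hderiv hinj]
  simp only [det_restrictScalars_toSpanSingleton, abs_sq]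

/-- The real-linear map `w ↦ w - β w̄`. For `|β| < 1` it maps an ellipse to a disc. -/
noncomputable def subMulConj (β : ℂ) : ℂ →ₗ[ℝ] ℂ :=
  LinearMap.id - β • conjAe.toLinearMap

theorem subMulConj_apply (β w : ℂ) : subMulConj β w = w - β * conj w := rfl

theorem det_subMulConj (β : ℂ) : LinearMap.det (subMulConj β) = 1 - ‖β‖ ^ 2 := by
  have hmatrix : LinearMap.toMatrix basisOneI basisOneI (subMulConj β) =
      !![1 - β.re, -β.im; -β.im, 1 + β.re] := by
    ext i j
    fin_cases i <;> fin_cases j <;> simp [LinearMap.toMatrix_apply, subMulConj_apply]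
  rw [← LinearMap.det_toMatrix basisOneI, hmatrix, Matrix.det_fin_two_of, ← normSq_eq_norm_sq,
    normSq_apply]
  ring

theorem volume_preimage_subMulConj_closedBall {β : ℂ} (hβ : ‖β‖ < 1) (x : ℂ) {R : ℝ} (hR : 0 ≤ R) :
    volume (subMulConj β ⁻¹' closedBall x R) = ENNReal.ofReal (π * R ^ 2 / (1 - ‖β‖ ^ 2)) := by
  have hdet : 0 < 1 - ‖β‖ ^ 2 := by nlinarith [norm_nonneg β]
  rw [Measure.addHaar_preimage_linearMap _ (by rw [det_subMulConj]; exact hdet.ne'), det_subMulConj,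
    abs_of_pos (inv_pos.2 hdet), Complex.volume_closedBall, ← ENNReal.ofReal_coe_nnreal,
    ← ENNReal.ofReal_pow hR, ← ENNReal.ofReal_mul (by positivity),
    ← ENNReal.ofReal_mul (by positivity), NNReal.coe_real_pi]
  congr 1
  field_simp

-- Otherwise `1 / (a (z⁻¹ + n z - w))` would be holomorphic on the disc, vanish at the centre and
-- have positive real part on the circle.
theorem exists_mem_sphere_re_mul_inv_add_sub_nonpos {n : ℂ → ℂ} {r : ℝ} {w : ℂ} (hr : 0 < r)
    (hn : DiffContOnCl ℂ n (ball 0 r))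
    (hw : w ∉ (fun z => z⁻¹ + n z) '' (closedBall 0 r \ {0})) (a : ℂ) :
    ∃ z ∈ sphere (0 : ℂ) r, (a * (z⁻¹ + n z - w)).re ≤ 0 := by
  by_contra! hpos
  have ha : a ≠ 0 := by
    rintro rfl
    simpa using hpos r (by simp [hr.le])
  set q : ℂ → ℂ := fun z => a * (1 + z * (n z - w)) with hq_def
  have hq_eq : ∀ z ≠ 0, z / q z = (a * (z⁻¹ + n z - w))⁻¹ := by
    intro z hz
    rw [show a * (z⁻¹ + n z - w) = q z / z by simp only [hq_def]; field_simp; ring, inv_div]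
  have hq0 : ∀ z ∈ closure (ball (0 : ℂ) r), q z ≠ 0 := by
    rw [closure_ball _ hr.ne']
    rintro z hz hqz
    rcases mul_eq_zero.1 hqz with h | h
    · exact ha h
    · have hz0 : z ≠ 0 := by
        rintro rfl
        simp at h
      exact hw ⟨z, ⟨hz, hz0⟩, by field_simp; linear_combination h⟩
  have hh : DiffContOnCl ℂ (fun z => -(z / q z)) (ball 0 r) := by
    have hq : DiffContOnCl ℂ q (ball 0 r) :=
      ((differentiable_id.diffContOnCl.smul (hn.sub_const w)).const_add 1).const_smul a
    exact (differentiable_id.diffContOnCl.smul (hq.inv hq0)).neg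
  have hhc := hh.continuousOn_ball.mono sphere_subset_closedBall
  obtain ⟨z₀, hz₀, hmax⟩ := (isCompact_sphere (0 : ℂ) r).exists_isMaxOn
    (NormedSpace.sphere_nonempty.2 hr.le) (continuous_re.comp_continuousOn hhc)
  have havg := circleAverage_mono_on_of_le_circle
    ((continuous_re.comp_continuousOn hhc).circleIntegrable hr.le) (by rwa [abs_of_pos hr])
  have hneg : (-(z₀ / q z₀)).re < 0 := by
    have := hpos z₀ hz₀
    rw [hq_eq z₀ (ne_of_mem_sphere hz₀ hr.ne'), neg_re, inv_re, neg_lt_zero]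
    exact div_pos this (normSq_pos.2 fun h => by simp [h] at this)
  refine hneg.not_ge (le_trans ?_ havg)
  exact ((circleAverage_re_eq hr.le hh).trans (by simp)).ge

theorem mem_closedConvexHull_image_sphere {n : ℂ → ℂ} {r : ℝ} {w : ℂ} (hr : 0 < r)
    (hn : DiffContOnCl ℂ n (ball 0 r))
    (hw : w ∉ (fun z => z⁻¹ + n z) '' (closedBall 0 r \ {0})) :
    w ∈ closedConvexHull ℝ ((fun z => z⁻¹ + n z) '' sphere 0 r) := by
  by_contra hwK
  obtain ⟨f, u, hfw, hfu⟩ :=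
    geometric_hahn_banach_point_closed convex_closedConvexHull isClosed_closedConvexHull hwK
  obtain ⟨a, rfl⟩ := (InnerProductSpace.toDual ℝ ℂ).surjective f
  obtain ⟨z, hz, hle⟩ := exists_mem_sphere_re_mul_inv_add_sub_nonpos hr hn hw (conj a)
  have hlt := hfw.trans (hfu _ (subset_closedConvexHull (mem_image_of_mem _ hz)))
  rw [InnerProductSpace.toDual_apply_apply, InnerProductSpace.toDual_apply_apply, Complex.inner,
    Complex.inner, mul_comm w, mul_comm (z⁻¹ + n z)] at hlt
  rw [mul_sub, sub_re] at hle
  linarith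

-- On `‖z‖ = r` the conjugate of `z⁻¹` is `z / r²`, so `subMulConj` cancels the linear term of `n`.
theorem subMulConj_inv_add_sub (n : ℂ → ℂ) {r : ℝ} {z : ℂ} (hr : r ≠ 0) (hz : z ∈ sphere 0 r) :
    subMulConj (deriv n 0 * r ^ 2) (z⁻¹ + n z - n 0) =
      z⁻¹ + z ^ 2 * dslope (dslope n 0) 0 z - deriv n 0 * r ^ 2 * conj (z * dslope n 0 z) := by
  have hn : n z - n 0 = z * dslope n 0 z := by simpa using (sub_smul_dslope n 0 z).symm
  have hdslope : dslope n 0 z = deriv n 0 + z * dslope (dslope n 0) 0 z := by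
    have := sub_smul_dslope (dslope n 0) 0 z
    rw [sub_zero, smul_eq_mul, dslope_same n 0] at this
    linear_combination -this
  have hconj : (r : ℂ) ^ 2 * conj z⁻¹ = z := by
    rw [← mem_sphere_zero_iff_norm.1 hz, ← mul_conj', mul_assoc, ← map_mul,
      mul_inv_cancel₀ (ne_of_mem_sphere hz hr), map_one, mul_one]
  rw [add_sub_assoc, hn, subMulConj_apply, map_add]
  linear_combination -deriv n 0 * hconj + z * hdslope

theorem exists_norm_subMulConj_inv_add_sub_le {n : ℂ → ℂ} {s : Set ℂ} (hs : s ∈ 𝓝 0)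
    (hn : DifferentiableOn ℂ n s) :
    ∃ C ≥ 0, ∀ᶠ r : ℝ in 𝓝[>] 0, ∀ z ∈ sphere (0 : ℂ) r,
      ‖subMulConj (deriv n 0 * r ^ 2) (z⁻¹ + n z - n 0)‖ ≤ r⁻¹ + C * r ^ 2 := by
  set k₁ := dslope n 0
  set k₂ := dslope k₁ 0
  have hk₁ : DifferentiableOn ℂ k₁ s := (differentiableOn_dslope hs).2 hn
  have hk₂ : DifferentiableOn ℂ k₂ s := (differentiableOn_dslope hs).2 hk₁
  have hc₁ : ContinuousAt k₁ 0 := hk₁.continuousOn.continuousAt hs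
  have hc₂ : ContinuousAt k₂ 0 := hk₂.continuousOn.continuousAt hs
  have hbdd : ∀ᶠ z in 𝓝 (0 : ℂ), ‖k₂ z‖ + ‖deriv n 0‖ * ‖z‖ * ‖k₁ z‖ < ‖k₂ 0‖ + 1 := by
    refine ContinuousAt.eventually_lt (by fun_prop) continuousAt_const ?_
    simp
  obtain ⟨ε, hε, hball⟩ := Metric.eventually_nhds_iff_ball.1 hbdd
  refine ⟨‖k₂ 0‖ + 1, by positivity, ?_⟩
  filter_upwards [Ioo_mem_nhdsGT hε] with r ⟨hr, hrε⟩ z hz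
  have hzr : ‖z‖ = r := mem_sphere_zero_iff_norm.1 hz
  have hlt := hball z (by simpa [hzr])
  rw [subMulConj_inv_add_sub n hr.ne' hz]
  calc ‖z⁻¹ + z ^ 2 * (k₂ z) - deriv n 0 * r ^ 2 * conj (z * k₁ z)‖
      ≤ ‖z⁻¹‖ + ‖z ^ 2 * k₂ z‖ + ‖deriv n 0 * r ^ 2 * conj (z * k₁ z)‖ :=
        (norm_sub_le _ _).trans (by gcongr; exact norm_add_le _ _)
    _ = r⁻¹ + (‖k₂ z‖ + ‖deriv n 0‖ * ‖z‖ * ‖k₁ z‖) * r ^ 2 := by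
        simp only [norm_mul, norm_pow, norm_inv, norm_conj, norm_real, norm_of_nonneg hr.le, hzr]
        ring
    _ ≤ r⁻¹ + (‖k₂ 0‖ + 1) * r ^ 2 := by gcongr

theorem volume_image_annulus_le {n : ℂ → ℂ} {r s R : ℝ} {β x : ℂ} (hr : 0 < r) (hs : s ≤ 1)
    (hn : DiffContOnCl ℂ n (ball 0 r)) (hinj : InjOn (fun z => z⁻¹ + n z) (ball 0 1 \ {0}))
    (hβ : ‖β‖ < 1) (hR : 0 ≤ R)
    (hbound : ∀ z ∈ sphere (0 : ℂ) r, ‖subMulConj β (z⁻¹ + n z - x)‖ ≤ R) :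
    volume ((fun z => z⁻¹ + n z) '' (ball 0 s \ closedBall 0 r)) ≤
      ENNReal.ofReal (π * R ^ 2 / (1 - ‖β‖ ^ 2)) := by
  rw [← volume_preimage_subMulConj_closedBall hβ (subMulConj β x) hR]
  refine measure_mono ?_
  rintro _ ⟨z, ⟨hzs, hzr⟩, rfl⟩
  have hz : z ∈ ball (0 : ℂ) 1 \ {0} :=
    ⟨ball_subset_ball hs hzs, fun h => hzr (by simp [mem_singleton_iff.1 h, hr.le])⟩
  refine closedConvexHull_min ?_ ((convex_closedBall _ _).linear_preimage _)
    (isClosed_closedBall.preimage (subMulConj β).continuous_of_finiteDimensional)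
    (mem_closedConvexHull_image_sphere hr hn ?_)
  · rintro _ ⟨ζ, hζ, rfl⟩
    rw [mem_preimage, mem_closedBall_iff_norm, ← map_sub]
    exact hbound ζ hζ
  · rintro ⟨ζ, ⟨hζr, hζ0⟩, heq⟩
    have hr1 : r < 1 := (not_le.1 (by simpa using hzr)).trans (by simpa using hz.1)
    have hζ : ζ ∈ ball (0 : ℂ) 1 \ {0} := ⟨closedBall_subset_ball hr1 hζr, hζ0⟩
    exact hzr (hinj hζ hz heq ▸ hζr)

theorem deriv_inv_add {n : ℂ → ℂ} {z : ℂ} (hz : z ≠ 0) (hn : DifferentiableAt ℂ n z) :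
    deriv (fun z => z⁻¹ + n z) z = deriv n z - (z ^ 2)⁻¹ := by
  have h : HasDerivAt (fun z => z⁻¹ + n z) _ z := (hasDerivAt_inv hz).add hn.hasDerivAt
  rw [h.deriv]
  ring

theorem area_inequality_annulus {n : ℂ → ℂ} {r s R : ℝ} {β x : ℂ} (hr : 0 < r) (hrs : r ≤ s)
    (hs : s < 1) (hn : DifferentiableOn ℂ n (ball 0 1))
    (hinj : InjOn (fun z => z⁻¹ + n z) (ball 0 1 \ {0})) (hβ : ‖β‖ < 1) (hR : 0 ≤ R)
    (hbound : ∀ z ∈ sphere (0 : ℂ) r, ‖subMulConj β (z⁻¹ + n z - x)‖ ≤ R) :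
    (r ^ 2)⁻¹ - (s ^ 2)⁻¹ + ‖deriv n 0‖ ^ 2 * (s ^ 2 - r ^ 2) ≤ R ^ 2 / (1 - ‖β‖ ^ 2) := by
  have hopen : IsOpen (ball (0 : ℂ) s \ closedBall 0 r) := isOpen_ball.sdiff isClosed_closedBall
  have hmem : ∀ z ∈ ball (0 : ℂ) s \ closedBall 0 r, z ∈ ball (0 : ℂ) 1 \ {0} := fun z hz =>
    ⟨ball_subset_ball hs.le hz.1, fun h => hz.2 (by simp [mem_singleton_iff.1 h, hr.le])⟩
  have hdiff : ∀ z ∈ ball (0 : ℂ) 1, DifferentiableAt ℂ n z := fun z hz =>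
    hn.differentiableAt (isOpen_ball.mem_nhds hz)
  have hF : DifferentiableOn ℂ (fun z => z⁻¹ + n z) (ball 0 s \ closedBall 0 r) := fun z hz =>
    ((differentiableAt_inv (hmem z hz).2).add (hdiff z (hmem z hz).1)).differentiableWithinAt
  have hsub : ∀ t < 1, closure (ball (0 : ℂ) t) ⊆ ball 0 1 := fun t ht =>
    closure_ball_subset_closedBall.trans (closedBall_subset_ball ht)
  have hvol := volume_image_annulus_le hr hs.le
    (hn.mono (hsub r (hrs.trans_lt hs))).diffContOnCl hinj hβ hR hbound
  rw [volume_image_eq_lintegral_norm_deriv_sq hopen hF (hinj.mono hmem)] at hvol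
  have hdet : 0 < 1 - ‖β‖ ^ 2 := by nlinarith [norm_nonneg β]
  have hint := ENNReal.toReal_le_of_le_ofReal (by positivity) hvol
  rw [← integral_eq_lintegral_of_nonneg_ae (Eventually.of_forall fun _ => sq_nonneg _)
    ((hF.deriv hopen).continuousOn.norm.pow 2 |>.aestronglyMeasurable hopen.measurableSet)] at hint
  rw [setIntegral_congr_fun hopen.measurableSet fun z hz => by
    rw [deriv_inv_add (hmem z hz).2 (hdiff z (hmem z hz).1)]] at hint
  have hlow := le_setIntegral_annulus_norm_sub_inv_sq_sq hr hrs
    ((hn.deriv isOpen_ball).mono (hsub s hs)).diffContOnCl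
  refine le_of_mul_le_mul_left ?_ pi_pos
  linarith [mul_div_assoc π (R ^ 2) (1 - ‖β‖ ^ 2)]

theorem norm_deriv_sq_mul_sq_le_of_injOn_inv_add {n : ℂ → ℂ} {s : ℝ}
    (hn : DifferentiableOn ℂ n (ball 0 1)) (hinj : InjOn (fun z => z⁻¹ + n z) (ball 0 1 \ {0}))
    (hs : s ∈ Ioo 0 1) : ‖deriv n 0‖ ^ 2 * s ^ 2 ≤ (s ^ 2)⁻¹ := by
  obtain ⟨C, hC, hbound⟩ :=
    exists_norm_subMulConj_inv_add_sub_le (ball_mem_nhds 0 one_pos) hn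
  set b := ‖deriv n 0‖ with hb
  have hdet : ∀ᶠ r : ℝ in 𝓝[>] 0, b * r ^ 2 < 1 := by
    have : ContinuousAt (fun r : ℝ => b * r ^ 2) 0 := by fun_prop
    exact nhdsWithin_le_nhds (this.eventually_lt continuousAt_const (by simp))
  set e : ℝ → ℝ := fun r =>
    b ^ 2 * r ^ 2 + (2 * C * r + C ^ 2 * r ^ 4 + b ^ 2 * r ^ 2) / (1 - (b * r ^ 2) ^ 2) with he_def
  have he : Tendsto e (𝓝[>] 0) (𝓝 0) := by
    have : ContinuousAt e 0 := by fun_prop (disch := simp)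
    simpa [e] using this.tendsto.mono_left nhdsWithin_le_nhds
  have hle : ∀ᶠ r in 𝓝[>] 0, b ^ 2 * s ^ 2 - (s ^ 2)⁻¹ ≤ e r := by
    filter_upwards [hbound, hdet, Ioo_mem_nhdsGT hs.1] with r hr hbr ⟨hr0, hrs⟩
    have hβ : ‖deriv n 0 * (r : ℂ) ^ 2‖ = b * r ^ 2 := by simp [b]
    have harea := area_inequality_annulus hr0 hrs.le hs.2 hn hinj (hβ ▸ hbr) (by positivity) hr
    have hne : 1 - (b * r ^ 2) ^ 2 ≠ 0 := by nlinarith [show 0 ≤ b * r ^ 2 by positivity]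
    have hexp : (r⁻¹ + C * r ^ 2) ^ 2 / (1 - (b * r ^ 2) ^ 2) =
        (r ^ 2)⁻¹ + (2 * C * r + C ^ 2 * r ^ 4 + b ^ 2 * r ^ 2) / (1 - (b * r ^ 2) ^ 2) := by
      rw [div_eq_iff hne, add_mul, div_mul_cancel₀ _ hne]
      field_simp
      ring
    rw [hβ, hexp, ← hb] at harea
    simp only [he_def]
    linarith
  linarith [ge_of_tendsto he hle]

theorem norm_deriv_le_one_of_injOn_inv_add {n : ℂ → ℂ} (hn : DifferentiableOn ℂ n (ball 0 1))
    (hinj : InjOn (fun z => z⁻¹ + n z) (ball 0 1 \ {0})) : ‖deriv n 0‖ ≤ 1 := by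
  have hl : Tendsto (fun s : ℝ => ‖deriv n 0‖ ^ 2 * s ^ 2) (𝓝[<] 1) (𝓝 (‖deriv n 0‖ ^ 2 * 1 ^ 2)) :=
    (Continuous.tendsto (by fun_prop) 1).mono_left nhdsWithin_le_nhds
  have hr : Tendsto (fun s : ℝ => (s ^ 2)⁻¹) (𝓝[<] 1) (𝓝 (1 ^ 2)⁻¹) :=
    (ContinuousAt.tendsto (by fun_prop (disch := norm_num))).mono_left nhdsWithin_le_nhds
  have hsq := le_of_tendsto_of_tendsto hl hr <| mem_of_superset (Ioo_mem_nhdsLT one_pos) fun s hs =>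
    norm_deriv_sq_mul_sq_le_of_injOn_inv_add hn hinj hs
  exact (sq_le_one_iff₀ (norm_nonneg _)).1 (by simpa using hsq)

/-! ### Bieberbach's inequality -/

theorem exists_analyticAt_pow_eq {u : ℂ → ℂ} {z₀ : ℂ} (hu : AnalyticAt ℂ u z₀) (hu0 : u z₀ ≠ 0)
    {n : ℕ} (hn : n ≠ 0) : ∃ v : ℂ → ℂ, AnalyticAt ℂ v z₀ ∧ ∀ z, v z ^ n = u z := by
  refine ⟨fun z => u z₀ ^ (n⁻¹ : ℂ) * (u z / u z₀) ^ (n⁻¹ : ℂ), ?_, fun z => ?_⟩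
  · exact analyticAt_const.mul ((hu.div analyticAt_const hu0).cpow analyticAt_const
      (by simp [div_self hu0]))
  · rw [mul_pow, cpow_nat_inv_pow _ hn, cpow_nat_inv_pow _ hn, mul_div_cancel₀ _ hu0]

theorem not_injOn_of_eventually_eq_pow {f h : ℂ → ℂ} {s : Set ℂ} {z₀ h' c : ℂ} {n : ℕ}
    (hs : s ∈ 𝓝 z₀) (hn : 2 ≤ n) (hh : HasStrictDerivAt h h' z₀) (hh' : h' ≠ 0) (hh0 : h z₀ = 0)
    (hf : ∀ᶠ z in 𝓝 z₀, f z = c + h z ^ n) : ¬InjOn f s := by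
  intro hinj
  have hζ : IsPrimitiveRoot (Complex.exp (2 * π * I / n)) n :=
    isPrimitiveRoot_exp n (by lia)
  set ζ := Complex.exp (2 * π * I / n)
  have hV : ∀ᶠ w in 𝓝 (0 : ℂ), w ∈ h '' {z ∈ s | f z = c + h z ^ n} := by
    rw [← hh0, ← hh.map_nhds_eq hh']
    exact image_mem_map (inter_mem hs hf)
  have hζV : ∀ᶠ w in 𝓝 (0 : ℂ), ζ * w ∈ h '' {z ∈ s | f z = c + h z ^ n} :=
    ((continuous_const_mul ζ).tendsto' 0 0 (mul_zero ζ)).eventually hV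
  obtain ⟨w, ⟨⟨a, ⟨has, hfa⟩, haw⟩, ⟨b, ⟨hbs, hfb⟩, hbw⟩⟩, hw⟩ :=
    (((hV.and hζV).filter_mono nhdsWithin_le_nhds).and
      (eventually_mem_nhdsWithin (a := 0) (s := {0}ᶜ))).exists
  have hab : a = b := hinj has hbs <| by
    rw [hfa, hfb, haw, hbw, mul_pow, hζ.pow_eq_one, one_mul]
  refine hζ.ne_one hn (mul_right_cancel₀ hw ?_)
  rw [one_mul, ← hbw, ← haw, hab]

theorem deriv_ne_zero_of_injOn {f : ℂ → ℂ} {s : Set ℂ} {z₀ : ℂ} (hs : s ∈ 𝓝 z₀)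
    (hf : AnalyticAt ℂ f z₀) (hinj : InjOn f s) : deriv f z₀ ≠ 0 := by
  have hz₀ : z₀ ∈ s := mem_of_mem_nhds hs
  have hne : ¬∀ᶠ z in 𝓝 z₀, f z - f z₀ = 0 := by
    intro h
    obtain ⟨z, ⟨hz, hzs⟩, hzz₀⟩ := (((h.and hs).filter_mono nhdsWithin_le_nhds).and
      (eventually_mem_nhdsWithin (a := z₀) (s := {z₀}ᶜ))).exists
    exact hzz₀ (hinj hzs hz₀ (sub_eq_zero.1 hz))
  obtain ⟨n, u, hu, hu0, hfu⟩ :=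
    (hf.sub analyticAt_const).exists_eventuallyEq_pow_smul_nonzero_iff.2 hne
  have hn0 : n ≠ 0 := by
    rintro rfl
    simpa [hu0.symm] using hfu.self_of_nhds
  obtain ⟨v, hv, hvu⟩ := exists_analyticAt_pow_eq hu hu0 hn0
  have hfv : ∀ᶠ z in 𝓝 z₀, f z = f z₀ + ((z - z₀) * v z) ^ n := by
    filter_upwards [hfu] with z hz
    rw [mul_pow, hvu, ← smul_eq_mul, ← hz, Pi.sub_apply, add_sub_cancel]
  have hv0 : v z₀ ≠ 0 := fun h => hu0 (by rw [← hvu, h, zero_pow hn0])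
  have hh : HasStrictDerivAt (fun z => (z - z₀) * v z) (v z₀) z₀ := by
    have hid : HasStrictDerivAt (fun z => z - z₀) 1 z₀ := (hasStrictDerivAt_id z₀).sub_const z₀
    have hmul : HasStrictDerivAt (fun z => (z - z₀) * v z) _ z₀ := hid.mul hv.hasStrictDerivAt
    simpa using hmul
  rcases (Nat.one_le_iff_ne_zero.2 hn0).eq_or_lt with rfl | hn
  · have : f =ᶠ[𝓝 z₀] fun z => f z₀ + (z - z₀) * v z := by simpa [EventuallyEq] using hfv
    rwa [this.deriv_eq, (hh.hasDerivAt.const_add _).deriv]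
  · exact absurd hinj (not_injOn_of_eventually_eq_pow hs hn hh hv0 (by simp) hfv)

theorem exists_differentiableOn_mul_exp_eq {V : ℂ → ℂ} {c : ℂ} {r : ℝ}
    (hV : DifferentiableOn ℂ V (ball c r)) (hV0 : ∀ z ∈ ball c r, V z ≠ 0) :
    ∃ p : ℂ → ℂ, DifferentiableOn ℂ p (ball c r) ∧ p c = 0 ∧
      ∀ z ∈ ball c r, V z = V c * Complex.exp (p z) := by
  obtain ⟨p, hpc, hp⟩ :=
    ((hV.deriv isOpen_ball).div hV hV0).isExactOn_ball.with_val_at c 0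
  have hderiv : ∀ z ∈ ball c r, HasDerivAt (fun z => V z * Complex.exp (-p z)) 0 z := by
    intro z hz
    have hVz := (hV.differentiableAt (isOpen_ball.mem_nhds hz)).hasDerivAt
    have hmul : HasDerivAt (fun z => V z * Complex.exp (-p z)) _ z := hVz.mul (hp z hz).fun_neg.cexp
    convert hmul using 1
    rw [Pi.div_apply]
    field_simp [hV0 z hz]
    ring
  refine ⟨p, fun z hz => (hp z hz).differentiableAt.differentiableWithinAt, hpc, fun z hz => ?_⟩
  have hcr : c ∈ ball c r := mem_ball_self (pos_of_mem_ball hz)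
  have hconst := isOpen_ball.is_const_of_deriv_eq_zero (convex_ball c r).isPreconnected
    (fun w hw => (hderiv w hw).differentiableAt.differentiableWithinAt)
    (fun w hw => (hderiv w hw).deriv) hz hcr
  rw [hpc, neg_zero, Complex.exp_zero, mul_one] at hconst
  rw [← hconst, mul_assoc, ← Complex.exp_add, neg_add_cancel, Complex.exp_zero, mul_one]

theorem inv_add_mul_dslope_sq {N : ℂ → ℂ} (hN0 : N 0 = 1) {z : ℂ} (hz : z ≠ 0) :
    z⁻¹ + z * dslope N 0 (z ^ 2) = N (z ^ 2) / z := by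
  have hsub := sub_smul_dslope N 0 (z ^ 2)
  rw [hN0, sub_zero, smul_eq_mul] at hsub
  field_simp
  linear_combination hsub

-- With `f w = w * exp (p w)`, this is the square-root transform `z ↦ 1 / √(f (z²))`.
theorem injOn_exp_neg_half_sq_div {p : ℂ → ℂ}
    (hinj : InjOn (fun z => z * Complex.exp (p z)) (ball 0 1)) :
    InjOn (fun z => Complex.exp (-p (z ^ 2) / 2) / z) (ball 0 1) := by
  have hexp : ∀ w, Complex.exp (-p w / 2) ^ 2 = (Complex.exp (p w))⁻¹ := by
    intro w
    rw [← Complex.exp_nat_mul, ← Complex.exp_neg]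
    ring_nf
  intro x hx y hy hxy
  dsimp only at hxy
  have hsq : x ^ 2 = y ^ 2 := hinj (by simpa using hx) (by simpa using hy) <| by
    have hxy2 := congr_arg (fun w => (w ^ 2)⁻¹) hxy
    simp only [_root_.div_pow, hexp, inv_div, div_inv_eq_mul] at hxy2
    exact hxy2
  rw [hsq] at hxy
  exact inv_injective (mul_left_cancel₀ (Complex.exp_ne_zero _) hxy)

theorem norm_deriv_le_two_of_injOn_mul_exp {p : ℂ → ℂ} (hp : DifferentiableOn ℂ p (ball 0 1))
    (hp0 : p 0 = 0) (hinj : InjOn (fun z => z * Complex.exp (p z)) (ball 0 1)) :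
    ‖deriv p 0‖ ≤ 2 := by
  set N : ℂ → ℂ := fun w => Complex.exp (-p w / 2)
  have hball : ball (0 : ℂ) 1 ∈ 𝓝 0 := ball_mem_nhds 0 one_pos
  have hN : DifferentiableOn ℂ N (ball 0 1) := (hp.neg.div_const 2).cexp
  have hN0 : N 0 = 1 := by simp [N, hp0]
  have hN' : deriv N 0 = -deriv p 0 / 2 := by
    simpa [hp0] using
      (((hp.differentiableAt hball).hasDerivAt.fun_neg.div_const 2).cexp).deriv
  set n : ℂ → ℂ := fun z => z * dslope N 0 (z ^ 2)
  have hdslope : DifferentiableOn ℂ (fun z => dslope N 0 (z ^ 2)) (ball 0 1) :=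
    ((differentiableOn_dslope hball).2 hN).comp (differentiable_pow 2).differentiableOn
      fun z hz => by simpa using hz
  have hn' : deriv n 0 = deriv N 0 := by
    have hmul : HasDerivAt n _ 0 :=
      (hasDerivAt_id 0).mul (hdslope.differentiableAt hball).hasDerivAt
    simpa using hmul.deriv
  have hninj : InjOn (fun z => z⁻¹ + n z) (ball 0 1 \ {0}) :=
    ((injOn_exp_neg_half_sq_div hinj).mono sdiff_subset).congr fun z hz =>
      (inv_add_mul_dslope_sq hN0 hz.2).symm
  have hbound : ‖deriv n 0‖ ≤ 1 :=
    norm_deriv_le_one_of_injOn_inv_add (differentiableOn_id.mul hdslope) hninj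
  rw [hn', hN', norm_div, norm_neg, Complex.norm_ofNat] at hbound
  linarith

theorem deriv_deriv_const_add_mul_mul_exp {p : ℂ → ℂ} (hp : AnalyticAt ℂ p 0) (hp0 : p 0 = 0)
    (a b : ℂ) : deriv (deriv fun z => a + z * (b * Complex.exp (p z))) 0 = 2 * b * deriv p 0 := by
  have hderiv : ∀ᶠ z in 𝓝 0, deriv (fun z => a + z * (b * Complex.exp (p z))) z =
      b * Complex.exp (p z) * (1 + z * deriv p z) := by
    filter_upwards [hp.eventually_analyticAt] with z hz
    have hmul : HasDerivAt (fun z => z * (b * Complex.exp (p z))) _ z :=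
      (hasDerivAt_id z).mul (hz.differentiableAt.hasDerivAt.cexp.const_mul b)
    rw [(hmul.const_add a).deriv]
    simp only [id_eq]
    ring
  have hexp : HasDerivAt (fun z => b * Complex.exp (p z)) (b * deriv p 0) 0 := by
    simpa [hp0] using (hp.differentiableAt.hasDerivAt.cexp).const_mul b
  have hlin : HasDerivAt (fun z => 1 + z * deriv p z) (deriv p 0) 0 := by
    have hid : HasDerivAt (fun z => z * deriv p z) _ 0 :=
      (hasDerivAt_id 0).mul hp.deriv.differentiableAt.hasDerivAt
    simpa using hid.const_add 1
  have hmul : HasDerivAt (fun z => b * Complex.exp (p z) * (1 + z * deriv p z)) _ 0 :=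
    hexp.mul hlin
  rw [EventuallyEq.deriv_eq hderiv, hmul.deriv]
  simp only [hp0, Complex.exp_zero, zero_mul, add_zero, mul_one]
  ring

theorem norm_deriv_deriv_le_of_injOn {f : ℂ → ℂ} (hf : DifferentiableOn ℂ f (ball 0 1))
    (hinj : InjOn f (ball 0 1)) : ‖deriv (deriv f) 0‖ ≤ 4 * ‖deriv f 0‖ := by
  have hball : ball (0 : ℂ) 1 ∈ 𝓝 0 := ball_mem_nhds 0 one_pos
  have hf0 : deriv f 0 ≠ 0 := deriv_ne_zero_of_injOn hball (hf.analyticAt hball) hinj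
  have hdslope : ∀ z ∈ ball (0 : ℂ) 1, dslope f 0 z ≠ 0 := by
    intro z hz
    rcases eq_or_ne z 0 with rfl | hz0
    · rwa [dslope_same]
    · rw [dslope_of_ne _ hz0, slope_def_field, div_ne_zero_iff, sub_ne_zero, sub_ne_zero]
      exact ⟨fun h => hz0 (hinj hz (mem_ball_self one_pos) h), hz0⟩
  obtain ⟨p, hp, hp0, hpf⟩ := exists_differentiableOn_mul_exp_eq
    ((differentiableOn_dslope hball).2 hf) hdslope
  have hfp : ∀ z ∈ ball (0 : ℂ) 1, f z = f 0 + z * (deriv f 0 * Complex.exp (p z)) := by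
    intro z hz
    rw [← dslope_same f, ← hpf z hz]
    linear_combination - sub_smul_dslope f 0 z
  have hinjp : InjOn (fun z => z * Complex.exp (p z)) (ball 0 1) := by
    intro x hx y hy hxy
    refine hinj hx hy ?_
    rw [hfp x hx, hfp y hy]
    linear_combination deriv f 0 * hxy
  have hf'' : deriv (deriv f) 0 = 2 * deriv f 0 * deriv p 0 := by
    rw [← deriv_deriv_const_add_mul_mul_exp (hp.analyticAt hball) hp0 (f 0)]
    exact (eventuallyEq_of_mem hball hfp).deriv.deriv_eq
  have := norm_deriv_le_two_of_injOn_mul_exp hp hp0 hinjp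
  rw [hf'', norm_mul, norm_mul, Complex.norm_ofNat]
  nlinarith [norm_nonneg (deriv f 0)]

/-! ### Univalent maps into slit discs -/

theorem isClosed_lray (θ : ℝ) : IsClosed (lray θ) := by
  have hθ : Complex.exp (θ * I) ≠ 0 := Complex.exp_ne_zero _
  have hray : lray θ = (fun z : ℂ => z / Complex.exp (θ * I)) ⁻¹' ((↑) '' Ici (0 : ℝ)) := by
    ext z
    constructor
    · rintro ⟨t, ht, rfl⟩
      exact ⟨t, ht, (mul_div_cancel_right₀ _ hθ).symm⟩
    · rintro ⟨t, ht, htz⟩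
      exact ⟨t, ht, (eq_div_iff hθ).1 htz |>.symm⟩
  rw [hray]
  exact (isometry_ofReal.isClosedEmbedding.isClosedMap _ isClosed_Ici).preimage (by fun_prop)

theorem zero_mem_lray (θ : ℝ) : 0 ∈ lray θ :=
  ⟨0, le_rfl, by simp⟩

theorem mul_notMem_lray_arg_add_pi {p v : ℂ} (hp : p ≠ 0) (hv : v ∈ slitPlane) :
    p * v ∉ lray (arg p + π) := by
  rintro ⟨t, ht, h⟩
  have hpv : ‖p‖ * v = -t := by
    refine mul_right_cancel₀ (Complex.exp_ne_zero (arg p * I)) ?_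
    rw [mul_right_comm, norm_mul_exp_arg_mul_I, h]
    push_cast
    rw [add_mul, Complex.exp_add, Complex.exp_pi_mul_I]
    ring
  refine (mem_slitPlane_iff_not_le_zero.1 hv) ?_
  have hv' : v = ((-t / ‖p‖ : ℝ) : ℂ) := by
    have : (‖p‖ : ℂ) ≠ 0 := by simpa
    push_cast
    rw [eq_div_iff this, mul_comm, hpv]
  rw [hv']
  exact_mod_cast div_nonpos_of_nonpos_of_nonneg (neg_nonpos.2 ht) (norm_nonneg p)

theorem sq_mem_slitPlane_of_re_pos {w : ℂ} (hw : 0 < w.re) : w ^ 2 ∈ slitPlane := by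
  rw [mem_slitPlane_iff, sq, mul_re, mul_im]
  rcases eq_or_ne w.im 0 with him | him
  · left
    rw [him]
    nlinarith
  · right
    rw [mul_comm w.im, ← two_mul]
    positivity

theorem re_one_add_div_one_sub_pos {ζ : ℂ} (hζ : ‖ζ‖ < 1) : 0 < ((1 + ζ) / (1 - ζ)).re := by
  have hζ1 : 1 - ζ ≠ 0 := sub_ne_zero.2 fun h => by simp [← h] at hζ
  have hsq : ζ.re * ζ.re + ζ.im * ζ.im < 1 := by
    rw [← normSq_apply, normSq_eq_norm_sq]
    nlinarith [norm_nonneg ζ]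
  rw [div_re, ← add_div]
  refine div_pos ?_ (normSq_pos.2 hζ1)
  simp only [add_re, sub_re, one_re, add_im, sub_im, one_im]
  linarith

theorem norm_one_add_div_one_sub_lt {ζ : ℂ} {s : ℝ} (hζ : ‖ζ‖ < s) (hs : s < 1) :
    ‖(1 + ζ) / (1 - ζ)‖ < (1 + s) / (1 - s) := by
  have hnum : ‖1 + ζ‖ < 1 + s := (norm_add_le 1 ζ).trans_lt (by simpa using hζ)
  have hden : 1 - s < ‖1 - ζ‖ := by
    have := norm_sub_norm_le 1 ζ
    rw [norm_one] at this
    linarith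
  rw [norm_div]
  exact div_lt_div₀ hnum hden.le (by linarith [norm_nonneg ζ]) (by linarith)

/-- The univalent map `z ↦ p ((1 + s z) / (1 - s z))²` of the unit disc into the plane slit along
the ray opposite to `p`, sending `0` to `p`. It is an affine image of the Koebe function precomposed
with the homothety of ratio `s`; taking `s < 1` makes its image bounded. -/
noncomputable def slitMap (p : ℂ) (s : ℝ) (z : ℂ) : ℂ :=
  p * ((1 + s * z) / (1 - s * z)) ^ 2

theorem slitMap_zero (p : ℂ) (s : ℝ) : slitMap p s 0 = p := by
  simp [slitMap]

section
variable {p : ℂ} {s : ℝ} {z : ℂ}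

theorem norm_ofReal_mul_lt (hs0 : 0 < s) (hz : z ∈ ball (0 : ℂ) 1) : ‖s * z‖ < s := by
  rw [norm_mul, norm_real, Real.norm_of_nonneg hs0.le]
  exact mul_lt_of_lt_one_right hs0 (by simpa using hz)

theorem hasDerivAt_slitMap (p : ℂ) (hs0 : 0 < s) (hs1 : s < 1) (hz : z ∈ ball (0 : ℂ) 1) :
    HasDerivAt (slitMap p s) (slitMap p s z * (4 * s / (1 - (s * z) ^ 2))) z := by
  have hsz : ‖s * z‖ < 1 := (norm_ofReal_mul_lt hs0 hz).trans hs1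
  have hadd : 1 + s * z ≠ 0 := fun h => by simp [eq_neg_of_add_eq_zero_right h] at hsz
  have hsub : 1 - s * z ≠ 0 := sub_ne_zero.2 fun h => by simp [← h] at hsz
  have hid : HasDerivAt (fun z : ℂ => s * z) (s * 1) z := (hasDerivAt_id z).const_mul (s : ℂ)
  have hmap : HasDerivAt (slitMap p s) _ z :=
    (((hid.const_add 1).div (hid.const_sub 1) hsub).pow 2).const_mul p
  have hsq : 1 - (s * z) ^ 2 = (1 + s * z) * (1 - s * z) := by ring
  convert hmap using 1
  rw [hsq]
  simp only [slitMap, Pi.div_apply]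
  push_cast
  field_simp
  ring

theorem injOn_slitMap (hp : p ≠ 0) (hs0 : 0 < s) (hs1 : s < 1) :
    InjOn (slitMap p s) (ball 0 1) := by
  intro x hx y hy hxy
  have hsx : ‖s * x‖ < 1 := (norm_ofReal_mul_lt hs0 hx).trans hs1
  have hsy : ‖s * y‖ < 1 := (norm_ofReal_mul_lt hs0 hy).trans hs1
  have hx1 : 1 - s * x ≠ 0 := sub_ne_zero.2 fun h => by simp [← h] at hsx
  have hy1 : 1 - s * y ≠ 0 := sub_ne_zero.2 fun h => by simp [← h] at hsy
  have hquot : (1 + s * x) / (1 - s * x) = (1 + s * y) / (1 - s * y) := by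
    refine (sq_eq_sq_iff_eq_or_eq_neg.1 (mul_left_cancel₀ hp hxy)).resolve_right fun h => ?_
    have := re_one_add_div_one_sub_pos hsx
    rw [h, neg_re] at this
    linarith [re_one_add_div_one_sub_pos hsy]
  rw [div_eq_div_iff hx1 hy1] at hquot
  have hs : (2 * s : ℂ) ≠ 0 := by simpa using hs0.ne'
  refine mul_left_cancel₀ hs ?_
  linear_combination hquot

theorem mapsTo_slitMap (hp : p ≠ 0) (hs0 : 0 < s) (hs1 : s < 1)
    (hps : ‖p‖ * ((1 + s) / (1 - s)) ^ 2 ≤ 1) :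
    MapsTo (slitMap p s) (ball 0 1) (ball 0 1 \ lray (arg p + π)) := by
  intro z hz
  have hsz : ‖s * z‖ < s := norm_ofReal_mul_lt hs0 hz
  refine ⟨?_, mul_notMem_lray_arg_add_pi hp
    (sq_mem_slitPlane_of_re_pos (re_one_add_div_one_sub_pos (hsz.trans hs1)))⟩
  rw [mem_ball_zero_iff, slitMap, norm_mul, norm_pow]
  refine lt_of_lt_of_le ?_ hps
  exact mul_lt_mul_of_pos_left (pow_lt_pow_left₀ (norm_one_add_div_one_sub_lt hsz hs1)
    (norm_nonneg _) two_ne_zero) (norm_pos_iff.2 hp)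

theorem hasDerivAt_div_one_sub_mul_sq (a b : ℂ) :
    HasDerivAt (fun z => a / (1 - (b * z) ^ 2)) 0 0 := by
  have hid : HasDerivAt (fun z => b * z) (b * 1) 0 := (hasDerivAt_id 0).const_mul b
  have hdiv : HasDerivAt (fun z => a / (1 - (b * z) ^ 2)) _ 0 :=
    (hasDerivAt_const 0 a).div ((hid.pow 2).const_sub 1) (by simp)
  simpa using hdiv

theorem mul_norm_mul_deriv_mul_deriv_le_of_injOn {φ : ℂ → ℂ} (hp : p ≠ 0) (hs0 : 0 < s)
    (hs1 : s < 1) (hps : ‖p‖ * ((1 + s) / (1 - s)) ^ 2 ≤ 1)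
    (hφ : DifferentiableOn ℂ φ (ball 0 1 \ lray (arg p + π)))
    (hinj : InjOn φ (ball 0 1 \ lray (arg p + π))) :
    s * ‖p * deriv (fun z => z * deriv φ z) p‖ ≤ ‖p * deriv φ p‖ := by
  have hopen : IsOpen (ball 0 1 \ lray (arg p + π)) := isOpen_ball.sdiff (isClosed_lray _)
  have hmaps := mapsTo_slitMap hp hs0 hs1 hps
  set P : ℂ → ℂ := fun z => z * deriv φ z
  set m := slitMap p s
  have hm0 : m 0 = p := slitMap_zero p s
  have hball : ball (0 : ℂ) 1 ∈ 𝓝 0 := ball_mem_nhds 0 one_pos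
  have hderiv : ∀ z ∈ ball (0 : ℂ) 1,
      HasDerivAt (φ ∘ m) (P (m z) * (4 * s / (1 - (s * z) ^ 2))) z := by
    intro z hz
    have hφm := (hφ.differentiableAt (hopen.mem_nhds (hmaps hz))).hasDerivAt
    refine (hφm.comp z (hasDerivAt_slitMap p hs0 hs1 hz)).congr_deriv ?_
    ring
  have hderiv0 : deriv (φ ∘ m) 0 = 4 * s * P p := by
    rw [(hderiv 0 (mem_ball_self one_pos)).deriv, hm0]
    ring
  have hderiv2 : deriv (deriv (φ ∘ m)) 0 = 16 * s ^ 2 * (p * deriv P p) := by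
    have hP : DifferentiableAt ℂ P (m 0) :=
      differentiableAt_id.mul ((hφ.deriv hopen).differentiableAt
        (hopen.mem_nhds (hmaps (mem_ball_self one_pos))))
    have hmul : HasDerivAt (fun z => P (m z) * (4 * s / (1 - (s * z) ^ 2))) _ 0 :=
      (hP.hasDerivAt.comp 0 (hasDerivAt_slitMap p hs0 hs1 (mem_ball_self one_pos))).mul
        (hasDerivAt_div_one_sub_mul_sq (4 * s) s)
    rw [(eventuallyEq_of_mem hball fun z hz => (hderiv z hz).deriv).deriv_eq, hmul.deriv, hm0]
    simp only [hm0, m]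
    ring
  have hbieb := norm_deriv_deriv_le_of_injOn
    (fun z hz => (hderiv z hz).differentiableAt.differentiableWithinAt)
    (hinj.comp (injOn_slitMap hp hs0 hs1) hmaps)
  rw [hderiv0, hderiv2, norm_mul, norm_mul (4 * s : ℂ)] at hbieb
  simp only [norm_mul (16 : ℂ), norm_mul (4 : ℂ), norm_pow, norm_real,
    Real.norm_of_nonneg hs0.le, Complex.norm_ofNat] at hbieb
  refine le_of_mul_le_mul_left ?_ (mul_pos (by norm_num : (0 : ℝ) < 16) hs0)
  linarith

end

/-! ### Growth at an isolated singularity -/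

theorem gronwallBound_le_mul_exp {δ K ε x : ℝ} (hK : 0 < K) (hε : 0 ≤ ε) :
    gronwallBound δ K ε x ≤ (δ + ε / K) * Real.exp (K * x) := by
  simp only [gronwallBound_of_K_ne_0 hK.ne', add_mul, mul_sub, mul_one]
  linarith [div_nonneg hε hK.le]

section
variable {E : Type*} [NormedAddCommGroup E] [NormedSpace ℂ E] {F : ℂ → E} {q ε δ : ℝ} {u : ℂ}

theorem hasDerivAt_comp_exp_neg_mul {x : ℝ} (hF : DifferentiableAt ℂ F (Real.exp (-x) * u)) :
    HasDerivAt (fun x : ℝ => F (Real.exp (-x) * u))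
      (-((Real.exp (-x) * u) • deriv F (Real.exp (-x) * u))) x := by
  have hexp : HasDerivAt (fun x : ℝ => (Real.exp (-x) * u : ℂ)) (-(Real.exp (-x) * u)) x := by
    simpa using (hasDerivAt_neg x).exp.ofReal_comp.mul_const u
  rw [← neg_smul]
  exact hF.hasDerivAt.scomp x hexp

theorem norm_comp_exp_neg_mul_le (hq : 0 < q) (hε : 0 ≤ ε)
    (hF : ∀ z, z ≠ 0 → ‖z‖ ≤ δ → DifferentiableAt ℂ F z)
    (hbound : ∀ z, z ≠ 0 → ‖z‖ ≤ δ → ‖z • deriv F z‖ ≤ q * ‖F z‖ + ε)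
    (hu0 : u ≠ 0) (huδ : ‖u‖ ≤ δ) {x : ℝ} (hx : 0 ≤ x) :
    ‖F (Real.exp (-x) * u)‖ ≤ (‖F u‖ + ε / q) * Real.exp (q * x) := by
  have hne : ∀ y : ℝ, (Real.exp (-y) * u : ℂ) ≠ 0 := fun y =>
    mul_ne_zero (by exact_mod_cast (Real.exp_pos (-y)).ne') hu0
  have hle : ∀ y : ℝ, 0 ≤ y → ‖(Real.exp (-y) * u : ℂ)‖ ≤ δ := by
    intro y hy
    rw [norm_mul, norm_real, Real.norm_of_nonneg (Real.exp_pos _).le]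
    exact (mul_le_of_le_one_left (norm_nonneg u) (Real.exp_le_one_iff.2 (by linarith))).trans huδ
  have hderiv : ∀ y : ℝ, 0 ≤ y → HasDerivAt (fun x : ℝ => F (Real.exp (-x) * u))
      (-((Real.exp (-y) * u) • deriv F (Real.exp (-y) * u))) y := fun y hy =>
    hasDerivAt_comp_exp_neg_mul (hF _ (hne y) (hle y hy))
  have hgronwall := norm_le_gronwallBound_of_norm_deriv_right_le (δ := ‖F u‖) (b := x)
    (fun y hy => (hderiv y hy.1).continuousAt.continuousWithinAt)
    (fun y hy => (hderiv y hy.1).hasDerivWithinAt) (le_of_eq (by simp))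
    (fun y hy => (norm_neg _).trans_le (hbound _ (hne y) (hle y hy.1))) x ⟨hx, le_rfl⟩
  rw [sub_zero] at hgronwall
  exact hgronwall.trans (gronwallBound_le_mul_exp hq hε)

theorem isBigO_norm_rpow_neg_of_norm_smul_deriv_le (hq : 0 < q) (hε : 0 ≤ ε) (hδ : 0 < δ)
    (hF : ∀ z, z ≠ 0 → ‖z‖ ≤ δ → DifferentiableAt ℂ F z)
    (hbound : ∀ z, z ≠ 0 → ‖z‖ ≤ δ → ‖z • deriv F z‖ ≤ q * ‖F z‖ + ε) :
    F =O[𝓝[≠] 0] fun z => ‖z‖ ^ (-q) := by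
  obtain ⟨M, hM⟩ := (isCompact_sphere (0 : ℂ) δ).exists_bound_of_continuousOn (f := F)
    fun u hu => (hF u (ne_of_mem_sphere hu hδ.ne')
      (mem_sphere_zero_iff_norm.1 hu).le).continuousAt.continuousWithinAt
  refine Asymptotics.IsBigO.of_bound ((M + ε / q) * δ ^ q) ?_
  filter_upwards [self_mem_nhdsWithin, nhdsWithin_le_nhds (closedBall_mem_nhds 0 hδ)] with z hz0 hzδ
  have hz : 0 < ‖z‖ := norm_pos_iff.2 hz0
  have hzδ : ‖z‖ ≤ δ := mem_closedBall_zero_iff.1 hzδ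
  have hexp : Real.exp (Real.log (δ / ‖z‖)) = δ / ‖z‖ := Real.exp_log (by positivity)
  set u : ℂ := (δ / ‖z‖ : ℝ) * z
  have hu : ‖u‖ = δ := by
    rw [norm_mul, norm_real, Real.norm_of_nonneg (by positivity), div_mul_cancel₀ _ hz.ne']
  have hzu : (Real.exp (-Real.log (δ / ‖z‖)) * u : ℂ) = z := by
    rw [Real.exp_neg, hexp, ← mul_assoc, ← ofReal_mul, inv_mul_cancel₀ (by positivity), ofReal_one,
      one_mul]
  have hFz := norm_comp_exp_neg_mul_le hq hε hF hbound (norm_pos_iff.1 (hu ▸ hδ)) hu.le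
    (Real.log_nonneg ((one_le_div hz).2 hzδ))
  rw [hzu, mul_comm q, Real.exp_mul, hexp, Real.div_rpow hδ.le hz.le] at hFz
  rw [Real.norm_of_nonneg (by positivity), Real.rpow_neg hz.le, mul_assoc, ← div_eq_mul_inv]
  refine hFz.trans ?_
  gcongr
  exact hM u (by simpa using hu)

end

theorem isBigO_norm_rpow_neg_of_norm_mul_deriv_mul_deriv_le {g : ℂ → ℂ} {q ε δ : ℝ} (hq : 1 ≤ q)
    (hε : 0 ≤ ε) (hδ : 0 < δ) (hg : ∀ z, z ≠ 0 → ‖z‖ ≤ δ → AnalyticAt ℂ g z)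
    (hbound : ∀ z, z ≠ 0 → ‖z‖ ≤ δ →
      ‖z * deriv (fun w => w * deriv g w) z‖ ≤ q * ‖z * deriv g z‖ + ε) :
    g =O[𝓝[≠] 0] fun z => ‖z‖ ^ (-q) := by
  set F : ℂ → ℂ × ℂ := fun z => (g z, z * deriv g z)
  have hF : ∀ z, z ≠ 0 → ‖z‖ ≤ δ →
      HasDerivAt F (deriv g z, deriv (fun w => w * deriv g w) z) z := fun z hz0 hzδ =>
    (hg z hz0 hzδ).differentiableAt.hasDerivAt.prodMk
      (differentiableAt_id.mul (hg z hz0 hzδ).deriv.differentiableAt).hasDerivAt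
  have hFbound : ∀ z, z ≠ 0 → ‖z‖ ≤ δ → ‖z • deriv F z‖ ≤ q * ‖F z‖ + ε := by
    intro z hz0 hzδ
    have hsnd : ‖z * deriv g z‖ ≤ ‖F z‖ := norm_snd_le (F z)
    rw [(hF z hz0 hzδ).deriv, Prod.smul_mk, Prod.norm_mk, smul_eq_mul, smul_eq_mul]
    refine max_le ?_ ((hbound z hz0 hzδ).trans (by gcongr))
    nlinarith [norm_nonneg (F z)]
  exact (isBigO_norm_rpow_neg_of_norm_smul_deriv_le (one_pos.trans_le hq) hε hδ
    (fun z hz0 hzδ => (hF z hz0 hzδ).differentiableAt) hFbound).prod_left_fst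

theorem isLittleO_norm_mul_norm_rpow_neg_inv {q : ℝ} (hq : q < 2) :
    (fun z : ℂ => ‖z‖ * ‖z‖ ^ (-q)) =o[𝓝[≠] 0] fun z => z⁻¹ := by
  have htendsto : Tendsto (fun z : ℂ => ‖z‖ ^ (2 - q)) (𝓝[≠] 0) (𝓝 0) := by
    have hcont := (continuous_norm (E := ℂ)).rpow_const (p := 2 - q) fun _ => Or.inr (by linarith)
    simpa [Real.zero_rpow (sub_pos.2 hq).ne'] using (hcont.tendsto 0).mono_left nhdsWithin_le_nhds
  refine (Asymptotics.isLittleO_of_tendsto' ?_ (htendsto.congr' ?_)).of_norm_right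
  · filter_upwards [self_mem_nhdsWithin] with z hz h
    exact absurd (inv_eq_zero.1 (norm_eq_zero.1 h)) hz
  · filter_upwards [self_mem_nhdsWithin] with z hz
    have hz : 0 < ‖z‖ := norm_pos_iff.2 hz
    rw [norm_inv, div_inv_eq_mul, sub_eq_neg_add, Real.rpow_add hz, Real.rpow_two]
    ring

theorem exists_eq_div_add_of_isBigO_norm_rpow_neg {g : ℂ → ℂ} {s : Set ℂ} {q : ℝ} (hs : s ∈ 𝓝 0)
    (hg : DifferentiableOn ℂ g (s \ {0})) (hq : q < 2)
    (hO : g =O[𝓝[≠] 0] fun z => ‖z‖ ^ (-q)) :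
    ∃ (a : ℂ) (G : ℂ → ℂ), DifferentiableOn ℂ G s ∧ ∀ z ∈ s \ {0}, g z = a / z + G z := by
  set H : ℂ → ℂ := fun z => z * g z
  have hH : DifferentiableOn ℂ H (s \ {0}) := differentiableOn_id.mul hg
  have hlittle : (fun z => H z - H 0) =o[𝓝[≠] 0] fun z : ℂ => (z - 0)⁻¹ := by
    simp only [H, zero_mul, sub_zero]
    exact ((Asymptotics.isBigO_refl (fun z : ℂ => z) _).norm_right.mul hO).trans_isLittleO
      (isLittleO_norm_mul_norm_rpow_neg_inv hq)
  have hext := Complex.differentiableOn_update_limUnder_of_isLittleO hs hH hlittle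
  set a := limUnder (𝓝[≠] 0) H
  refine ⟨a, dslope (Function.update H 0 a) 0, (differentiableOn_dslope hs).2 hext, ?_⟩
  rintro z ⟨-, hz⟩
  have hz : z ≠ 0 := hz
  rw [dslope_of_ne _ hz, slope_def_field, Function.update_of_ne hz, Function.update_self]
  simp only [H]
  field_simp
  ring

/-! ### Branches of the logarithm on slit discs -/

theorem isOpen_ball_sdiff_lray (c : ℂ) (r θ : ℝ) : IsOpen (ball c r \ lray θ) :=
  isOpen_ball.sdiff (isClosed_lray θ)

theorem ball_sdiff_lray_subset (c : ℂ) (r θ : ℝ) : ball c r \ lray θ ⊆ ball c r \ {0} :=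
  sdiff_subset_sdiff_right (singleton_subset_iff.2 (zero_mem_lray θ))

/-- `L` is a holomorphic branch of the logarithm on `U`. -/
structure IsLogBranchOn (L : ℂ → ℂ) (U : Set ℂ) : Prop where
  differentiableOn : DifferentiableOn ℂ L U
  exp_eq : ∀ z ∈ U, Complex.exp (L z) = z

section
variable {g G L : ℂ → ℂ} {κ a p z : ℂ} {U : Set ℂ}

theorem IsLogBranchOn.hasDerivAt (hL : IsLogBranchOn L U) (hU : IsOpen U) (hz : z ∈ U) :
    HasDerivAt L z⁻¹ z := by
  have hderiv := (hL.differentiableOn.differentiableAt (hU.mem_nhds hz)).hasDerivAt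
  have hexp : HasDerivAt (fun w => Complex.exp (L w)) 1 z :=
    (hasDerivAt_id z).congr_of_eventuallyEq (eventuallyEq_of_mem (hU.mem_nhds hz) hL.exp_eq)
  have hmul := hderiv.cexp.unique hexp
  rw [hL.exp_eq z hz] at hmul
  rwa [eq_inv_of_mul_eq_one_right hmul] at hderiv

theorem IsLogBranchOn.hasDerivAt_add_mul (hL : IsLogBranchOn L U) (hU : IsOpen U) (hz : z ∈ U)
    (hg : DifferentiableAt ℂ g z) (κ : ℂ) :
    HasDerivAt (fun w => g w + κ * L w) (deriv g z + κ / z) z := by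
  rw [div_eq_mul_inv]
  exact hg.hasDerivAt.add ((hL.hasDerivAt hU hz).const_mul κ)

theorem norm_mul_deriv_mul_deriv_le_of_injOn_add_mul (hp : p ≠ 0) (hp' : ‖p‖ ≤ 1 / 25)
    (hg : DifferentiableOn ℂ g (ball 0 1 \ {0}))
    (hL : IsLogBranchOn L (ball 0 1 \ lray (arg p + π)))
    (hinj : InjOn (fun z => g z + κ * L z) (ball 0 1 \ lray (arg p + π))) :
    ‖p * deriv (fun z => z * deriv g z) p‖ ≤ 3 / 2 * ‖p * deriv g p + κ‖ := by
  set U := ball 0 1 \ lray (arg p + π)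
  have hU : IsOpen U := isOpen_ball_sdiff_lray 0 1 _
  have hUsub : U ⊆ ball 0 1 \ {0} := ball_sdiff_lray_subset 0 1 _
  have hderiv : ∀ z ∈ U, HasDerivAt (fun w => g w + κ * L w) (deriv g z + κ / z) z := fun z hz =>
    hL.hasDerivAt_add_mul hU hz (hg.differentiableAt
      ((isOpen_ball.sdiff isClosed_singleton).mem_nhds (hUsub hz))) κ
  have hmul : ∀ z ∈ U, z * deriv (fun w => g w + κ * L w) z = z * deriv g z + κ := by
    intro z hz
    rw [(hderiv z hz).deriv, mul_add, mul_div_cancel₀ _ (hUsub hz).2]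
  have hpU : p ∈ U := by
    refine ⟨by simp; linarith, ?_⟩
    simpa using mul_notMem_lray_arg_add_pi hp one_mem_slitPlane
  have hslit := mul_norm_mul_deriv_mul_deriv_le_of_injOn (s := 2 / 3) hp (by norm_num)
    (by norm_num) (by norm_num; linarith)
    (fun z hz => (hderiv z hz).differentiableAt.differentiableWithinAt) hinj
  rw [(eventuallyEq_of_mem (hU.mem_nhds hpU) hmul).deriv_eq, deriv_add_const, hmul p hpU] at hslit
  linarith

theorem exists_eq_div_add_of_forall_injOn_add_mul (hg : DifferentiableOn ℂ g (ball 0 1 \ {0}))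
    (hinj : ∀ θ : ℝ, ∃ L : ℂ → ℂ, IsLogBranchOn L (ball 0 1 \ lray θ) ∧
      InjOn (fun z => g z + κ * L z) (ball 0 1 \ lray θ)) :
    ∃ (a : ℂ) (G : ℂ → ℂ), DifferentiableOn ℂ G (ball 0 1) ∧
      ∀ z ∈ ball (0 : ℂ) 1 \ {0}, g z = a / z + G z := by
  have hbound : ∀ z, z ≠ 0 → ‖z‖ ≤ 1 / 25 →
      ‖z * deriv (fun w => w * deriv g w) z‖ ≤ 3 / 2 * ‖z * deriv g z‖ + 3 / 2 * ‖κ‖ := by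
    intro z hz0 hz
    obtain ⟨L, hL, hinjL⟩ := hinj (arg z + π)
    have := norm_mul_deriv_mul_deriv_le_of_injOn_add_mul hz0 hz hg hL hinjL
    linarith [norm_add_le (z * deriv g z) κ]
  refine exists_eq_div_add_of_isBigO_norm_rpow_neg (ball_mem_nhds 0 one_pos) hg
    (by norm_num : (3 / 2 : ℝ) < 2)
    (isBigO_norm_rpow_neg_of_norm_mul_deriv_mul_deriv_le (by norm_num) (by positivity)
      (by norm_num : (0 : ℝ) < 1 / 25) (fun z hz0 hz => ?_) hbound)
  exact hg.analyticAt ((isOpen_ball.sdiff isClosed_singleton).mem_nhds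
    ⟨mem_ball_zero_iff.2 (by linarith), hz0⟩)

end

/-! ### The Schwarzian derivative -/

theorem schwarzian_eq_of_deriv_eventuallyEq_div_sq {f u : ℂ → ℂ} {z : ℂ} (hz : z ≠ 0)
    (hu : AnalyticAt ℂ u z) (hu0 : u z ≠ 0) (hf : deriv f =ᶠ[𝓝 z] fun w => u w / w ^ 2) :
    schwarzian f z =
      deriv (logDeriv u) z - 1 / 2 * logDeriv u z ^ 2 + 2 * logDeriv u z / z := by
  have hlog : logDeriv (deriv f) =ᶠ[𝓝 z] fun w => logDeriv u w - 2 * w⁻¹ := by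
    filter_upwards [hf.eventuallyEq_nhds, hu.eventually_analyticAt,
      hu.continuousAt.eventually_ne hu0, eventually_ne_nhds hz] with w hfw huw huw0 hw
    rw [logDeriv_apply, hfw.deriv_eq, hfw.eq_of_nhds, ← logDeriv_apply (fun w => u w / w ^ 2),
      logDeriv_div (g := fun w => w ^ 2) w huw0 (pow_ne_zero 2 hw) huw.differentiableAt
        (differentiableAt_pow 2), logDeriv_pow, Nat.cast_ofNat, div_eq_mul_inv]
  have hr : DifferentiableAt ℂ (logDeriv u) z := (hu.deriv.div hu hu0).differentiableAt
  have hderiv : HasDerivAt (fun w => logDeriv u w - 2 * w⁻¹)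
      (deriv (logDeriv u) z - 2 * -(z ^ 2)⁻¹) z :=
    hr.hasDerivAt.sub ((hasDerivAt_inv hz).const_mul 2)
  change deriv (logDeriv (deriv f)) z - 1 / 2 * logDeriv (deriv f) z ^ 2 = _
  rw [hlog.deriv_eq, hderiv.deriv, hlog.eq_of_nhds]
  field_simp
  ring

theorem exists_differentiableOn_eq_schwarzian_sub {u : ℂ → ℂ} {ρ : ℝ} (hρ : 0 < ρ)
    (hu : DifferentiableOn ℂ u (ball 0 ρ)) (hu0 : ∀ z ∈ ball 0 ρ, u z ≠ 0) :
    ∃ h : ℂ → ℂ, DifferentiableOn ℂ h (ball 0 ρ) ∧ ∀ (f : ℂ → ℂ), ∀ z ∈ ball 0 ρ \ {0},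
      (deriv f =ᶠ[𝓝 z] fun w => u w / w ^ 2) →
        h z = schwarzian f z - 2 * logDeriv u 0 / z := by
  set r := logDeriv u
  have hr : DifferentiableOn ℂ r (ball 0 ρ) := (hu.deriv isOpen_ball).div hu hu0
  refine ⟨fun z => deriv r z - 1 / 2 * r z ^ 2 + 2 * dslope r 0 z,
    ((hr.deriv isOpen_ball).sub ((hr.pow 2).const_mul _)).add
      (((differentiableOn_dslope (ball_mem_nhds 0 hρ)).2 hr).const_mul 2), ?_⟩
  rintro f z ⟨hzρ, hz⟩ hf
  beta_reduce
  rw [schwarzian_eq_of_deriv_eventuallyEq_div_sq hz (hu.analyticAt (isOpen_ball.mem_nhds hzρ))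
    (hu0 z hzρ) hf, dslope_of_ne _ hz, slope_def_field]
  ring

section
variable {g G L : ℂ → ℂ} {κ a z : ℂ} {U : Set ℂ}

theorem IsLogBranchOn.deriv_add_mul_eq_div_sq (hL : IsLogBranchOn L U) (hU : IsOpen U)
    (hUsub : U ⊆ ball 0 1 \ {0}) (hG : DifferentiableOn ℂ G (ball 0 1))
    (hgG : ∀ z ∈ ball 0 1 \ {0}, g z = a / z + G z) (hz : z ∈ U) :
    deriv (fun w => g w + κ * L w) z = (-a + κ * z + z ^ 2 * deriv G z) / z ^ 2 := by
  obtain ⟨hz1, hz0 : z ≠ 0⟩ := hUsub hz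
  have hdiv : HasDerivAt (fun w => a / w) (a * -(z ^ 2)⁻¹) z := by
    simpa only [div_eq_mul_inv] using (hasDerivAt_inv hz0).const_mul a
  have hGz := (hG.differentiableAt (isOpen_ball.mem_nhds hz1)).hasDerivAt
  have hg : HasDerivAt g (a * -(z ^ 2)⁻¹ + deriv G z) z := (hdiv.add hGz).congr_of_eventuallyEq
    (eventuallyEq_of_mem (hU.mem_nhds hz) fun w hw => hgG w (hUsub hw))
  rw [(hL.hasDerivAt_add_mul hU hz hg.differentiableAt κ).deriv, hg.deriv]
  field_simp
  ring

theorem logDeriv_neg_add_mul_add_sq_mul_deriv (hG : AnalyticAt ℂ G 0) (a κ : ℂ) :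
    logDeriv (fun z => -a + κ * z + z ^ 2 * deriv G z) 0 = -(κ / a) := by
  have hlin : HasDerivAt (fun z => -a + κ * z) (κ * 1) 0 :=
    ((hasDerivAt_id 0).const_mul κ).const_add (-a)
  have hsq : HasDerivAt (fun z => z ^ 2 * deriv G z) _ 0 :=
    (hasDerivAt_pow 2 (0 : ℂ)).mul hG.deriv.differentiableAt.hasDerivAt
  have hderiv : HasDerivAt (fun z => -a + κ * z + z ^ 2 * deriv G z) _ 0 := hlin.add hsq
  rw [logDeriv_apply, hderiv.deriv]
  simp [div_neg]

theorem exists_schwarzian_add_mul_extension (hG : DifferentiableOn ℂ G (ball 0 1))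
    (hgG : ∀ z ∈ ball 0 1 \ {0}, g z = a / z + G z) (ha : a ≠ 0) (κ : ℂ) :
    ∃ ρ : ℝ, 0 < ρ ∧ ρ < 1 ∧ ∃ h : ℂ → ℂ, DifferentiableOn ℂ h (ball 0 ρ) ∧
      ∀ (θ : ℝ) (L : ℂ → ℂ), IsLogBranchOn L (ball 0 1 \ lray θ) → ∀ z ∈ ball 0 ρ \ lray θ,
        deriv (fun w => g w + κ * L w) z ≠ 0 ∧
          h z = schwarzian (fun w => g w + κ * L w) z + 2 * κ / (a * z) := by
  set u : ℂ → ℂ := fun z => -a + κ * z + z ^ 2 * deriv G z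
  have hu : DifferentiableOn ℂ u (ball 0 1) :=
    ((differentiableOn_id.const_mul κ).const_add (-a)).add
      ((differentiable_pow 2).differentiableOn.mul (hG.deriv isOpen_ball))
  have hball : ball (0 : ℂ) 1 ∈ 𝓝 0 := ball_mem_nhds 0 one_pos
  have hu00 : u 0 ≠ 0 := by simpa [u] using ha
  obtain ⟨r, hr, hur⟩ := Metric.eventually_nhds_iff_ball.1
    ((hu.differentiableAt hball).continuousAt.eventually_ne hu00)
  set ρ := min r (1 / 2)
  have hρ1 : ρ < 1 := (min_le_right r _).trans_lt (by norm_num)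
  have hρ : 0 < ρ := by positivity
  have hsub : ball (0 : ℂ) ρ ⊆ ball 0 1 := ball_subset_ball hρ1.le
  have hu0 : ∀ z ∈ ball 0 ρ, u z ≠ 0 := fun z hz => hur z (ball_subset_ball (min_le_left r _) hz)
  obtain ⟨h, hh, hS⟩ := exists_differentiableOn_eq_schwarzian_sub hρ (hu.mono hsub) hu0
  refine ⟨ρ, hρ, hρ1, h, hh, fun θ L hL z hz => ?_⟩
  have hopen : IsOpen (ball 0 1 \ lray θ) := isOpen_ball_sdiff_lray 0 1 θ
  have hderiv : ∀ w ∈ ball 0 1 \ lray θ, deriv (fun w => g w + κ * L w) w = u w / w ^ 2 :=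
    fun w hw => hL.deriv_add_mul_eq_div_sq hopen (ball_sdiff_lray_subset 0 1 θ) hG hgG hw
  have hz1 : z ∈ ball 0 1 \ lray θ := ⟨hsub hz.1, hz.2⟩
  obtain ⟨hzρ, hz0 : z ≠ 0⟩ := ball_sdiff_lray_subset 0 ρ θ hz
  constructor
  · rw [hderiv z hz1]
    exact div_ne_zero (hu0 z hzρ) (pow_ne_zero 2 hz0)
  · rw [hS _ z ⟨hzρ, hz0⟩ (eventuallyEq_of_mem (hopen.mem_nhds hz1) hderiv),
      logDeriv_neg_add_mul_add_sq_mul_deriv (hG.analyticAt hball)]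
    field_simp
    ring

end

end

/-- Theorem A, parabolic case: if every branch
`φ_θ = g + (c/2πi)·L_θ` is injective on `𝔻 ∖ l^θ` (`c ≠ 0`), then (1) `g` extends
meromorphically with a pole of order at most 1 at `0`, i.e. `g(z) = a₋₁/z + G(z)`
with `G` holomorphic on `𝔻`; and (2) if `a₋₁ ≠ 0`, for each branch the Schwarzian
derivative `ξ = S(φ_θ)` is such that `ξ(z) + c/(a₋₁·π·i·z)` extends holomorphically
to some disc `B(0,ρ)`; i.e. `ξ` has a simple pole at `0` with residue
`-c/(a₋₁·π·i)`. -/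
theorem theoremA_parabolic_case
    (g : ℂ → ℂ) (c : ℂ) (hc : c ≠ 0)
    (hg : DifferentiableOn ℂ g (ball (0 : ℂ) 1 \ {0}))
    (hyp : ∀ θ : ℝ, ∃ L : ℂ → ℂ,
      DifferentiableOn ℂ L (ball (0 : ℂ) 1 \ lray θ) ∧
      (∀ z ∈ ball (0 : ℂ) 1 \ lray θ, Complex.exp (L z) = z) ∧
      InjOn (fun z => g z + c / (2 * (Real.pi : ℂ) * Complex.I) * L z)
        (ball (0 : ℂ) 1 \ lray θ)) :
    ∃ a : ℂ, ∃ G : ℂ → ℂ,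
      DifferentiableOn ℂ G (ball (0 : ℂ) 1) ∧
      (∀ z ∈ ball (0 : ℂ) 1 \ {0}, g z = a / z + G z) ∧
      (a ≠ 0 → ∀ θ : ℝ, ∀ L : ℂ → ℂ,
        DifferentiableOn ℂ L (ball (0 : ℂ) 1 \ lray θ) →
        (∀ z ∈ ball (0 : ℂ) 1 \ lray θ, Complex.exp (L z) = z) →
        InjOn (fun z => g z + c / (2 * (Real.pi : ℂ) * Complex.I) * L z)
          (ball (0 : ℂ) 1 \ lray θ) →
        ∃ ρ : ℝ, 0 < ρ ∧ ρ < 1 ∧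
          (∀ z ∈ ball (0 : ℂ) ρ \ lray θ,
            deriv (fun w => g w + c / (2 * (Real.pi : ℂ) * Complex.I) * L w) z ≠ 0) ∧
          ∃ h : ℂ → ℂ, DifferentiableOn ℂ h (ball (0 : ℂ) ρ) ∧
            ∀ z ∈ ball (0 : ℂ) ρ \ lray θ,
              h z = schwarzian
                  (fun w => g w + c / (2 * (Real.pi : ℂ) * Complex.I) * L w) z
                + c / (a * (Real.pi : ℂ) * Complex.I * z)) := by
  obtain ⟨a, G, hG, hgG⟩ := exists_eq_div_add_of_forall_injOn_add_mul hg fun θ =>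
    let ⟨L, hL, hexp, hinj⟩ := hyp θ
    ⟨L, ⟨hL, hexp⟩, hinj⟩
  refine ⟨a, G, hG, hgG, fun ha θ L hL hexp _ => ?_⟩
  obtain ⟨ρ, hρ, hρ1, h, hh, hS⟩ :=
    exists_schwarzian_add_mul_extension hG hgG ha (c / (2 * (Real.pi : ℂ) * Complex.I))
  refine ⟨ρ, hρ, hρ1, fun z hz => (hS θ L ⟨hL, hexp⟩ z hz).1, h, hh, fun z hz => ?_⟩
  have hz0 : z ≠ 0 := (ball_sdiff_lray_subset 0 ρ θ hz).2
  rw [(hS θ L ⟨hL, hexp⟩ z hz).2]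
  congr 1
  field_simp
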